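/- arXiv:2105.12966 — 2 statements merged into one kernel-verified Lean document; each statement's English description precedes it below -/
import Mathlib

section
/- Let σ1, σ2 : ℂ be such that G(σ1), G(σ2), G(σ1+σ2) and Wᵀ * G(σ1) * V, Wᵀ * G(σ2) * V, Wᵀ * G(σ1+σ2) * V are invertible. If x1(σ1) and x1(σ2) lie in the column span of V and the dual vector y1(σ1+σ2) = (G(σ1+σ2)ᵀ)⁻¹ *ᵥ C lies in the column span of W, then Ĥ2(σ1, σ2) = H2(σ1, σ2). -/
open Matrix
open scoped Kronecker

noncomputable section

/-- Kronecker product of vectors: `(u ⊗ v) (l, j) = u l * v j`. -/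
def vkron {n : ℕ} (u v : Fin n → ℂ) : Fin n × Fin n → ℂ :=
  fun p => u p.1 * v p.2

/-- The matrix pencil `G(s) = s • E - A`. -/
def Gm {n : ℕ} (E A : Matrix (Fin n) (Fin n) ℂ) (s : ℂ) : Matrix (Fin n) (Fin n) ℂ :=
  s • E - A

/-- Primal state of the first subsystem: `x1(s) = G(s)⁻¹ *ᵥ B`. -/
def x1 {n : ℕ} (E A : Matrix (Fin n) (Fin n) ℂ) (B : Fin n → ℂ) (s : ℂ) : Fin n → ℂ :=
  (Gm E A s)⁻¹ *ᵥ B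

/-- First-order transfer function `H1(s) = C ⬝ᵥ x1(s)`. -/
def H1 {n : ℕ} (E A : Matrix (Fin n) (Fin n) ℂ) (B C : Fin n → ℂ) (s : ℂ) : ℂ :=
  C ⬝ᵥ x1 E A B s

/-- Second-order input term `B₂(s1, s2)`. -/
def B2 {n : ℕ} (E A N : Matrix (Fin n) (Fin n) ℂ) (Q : Matrix (Fin n) (Fin n × Fin n) ℂ)
    (B : Fin n → ℂ) (s1 s2 : ℂ) : Fin n → ℂ :=
  Q *ᵥ vkron (x1 E A B s1) (x1 E A B s2) + (1/2 : ℂ) • (N *ᵥ (x1 E A B s1 + x1 E A B s2))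

/-- Primal state of the second subsystem: `x2(s1, s2) = G(s1+s2)⁻¹ *ᵥ B₂(s1, s2)`. -/
def x2 {n : ℕ} (E A N : Matrix (Fin n) (Fin n) ℂ) (Q : Matrix (Fin n) (Fin n × Fin n) ℂ)
    (B : Fin n → ℂ) (s1 s2 : ℂ) : Fin n → ℂ :=
  (Gm E A (s1 + s2))⁻¹ *ᵥ B2 E A N Q B s1 s2

/-- Second-order (symmetric) transfer function `H2(s1, s2) = C ⬝ᵥ x2(s1, s2)`. -/
def H2 {n : ℕ} (E A N : Matrix (Fin n) (Fin n) ℂ) (Q : Matrix (Fin n) (Fin n × Fin n) ℂ)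
    (B C : Fin n → ℂ) (s1 s2 : ℂ) : ℂ :=
  C ⬝ᵥ x2 E A N Q B s1 s2

/-- Dual state of the first subsystem: `y1(s) = (G(s)ᵀ)⁻¹ *ᵥ C`. -/
def y1 {n : ℕ} (E A : Matrix (Fin n) (Fin n) ℂ) (C : Fin n → ℂ) (s : ℂ) : Fin n → ℂ :=
  ((Gm E A s)ᵀ)⁻¹ *ᵥ C

/-- Mode-2 matricization: `Q⁽²⁾ j (l, i) = Q i (l, j)`. -/
def mode2 {n : ℕ} (Q : Matrix (Fin n) (Fin n × Fin n) ℂ) : Matrix (Fin n) (Fin n × Fin n) ℂ :=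
  fun j p => Q p.2 (p.1, j)

/-- Dual output term `C₂(s1, s2)`. -/
def C2 {n : ℕ} (E A N : Matrix (Fin n) (Fin n) ℂ) (Q : Matrix (Fin n) (Fin n × Fin n) ℂ)
    (B C : Fin n → ℂ) (s1 s2 : ℂ) : Fin n → ℂ :=
  mode2 Q *ᵥ vkron (x1 E A B s2) (y1 E A C (s1 + s2)) +
    (1/2 : ℂ) • (Nᵀ *ᵥ y1 E A C (s1 + s2))

/-- Dual state of the second subsystem: `y2(s1, s2) = (G(s1)ᵀ)⁻¹ *ᵥ C₂(s1, s2)`. -/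
def y2 {n : ℕ} (E A N : Matrix (Fin n) (Fin n) ℂ) (Q : Matrix (Fin n) (Fin n × Fin n) ℂ)
    (B C : Fin n → ℂ) (s1 s2 : ℂ) : Fin n → ℂ :=
  ((Gm E A s1)ᵀ)⁻¹ *ᵥ C2 E A N Q B C s1 s2

/-- `Q` is symmetric: `Q *ᵥ (u ⊗ v) = Q *ᵥ (v ⊗ u)` for all `u, v`. -/
def QSymm {n : ℕ} (Q : Matrix (Fin n) (Fin n × Fin n) ℂ) : Prop :=
  ∀ u v : Fin n → ℂ, Q *ᵥ vkron u v = Q *ᵥ vkron v u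

/-- Euclidean (ℓ²) norm of a vector in `Fin n → ℂ`. -/
def vnorm {n : ℕ} (v : Fin n → ℂ) : ℝ := ‖(WithLp.equiv 2 (Fin n → ℂ)).symm v‖

/-- ℓ²-induced operator norm of a square complex matrix. -/
def mnorm {n : ℕ} (M : Matrix (Fin n) (Fin n) ℂ) : ℝ := ‖Matrix.toEuclideanCLM (𝕜 := ℂ) M‖

theorem aux_Gm_reduced {n r : ℕ} (E A : Matrix (Fin n) (Fin n) ℂ)
    (V W : Matrix (Fin n) (Fin r) ℂ) (s : ℂ) :
    Gm (Wᵀ * E * V) (Wᵀ * A * V) s = Wᵀ * Gm E A s * V := by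
  simp [Gm, Matrix.mul_sub, Matrix.sub_mul]

theorem aux_inv_mulVec {m : ℕ} (M : Matrix (Fin m) (Fin m) ℂ) (h : IsUnit M)
    (v : Fin m → ℂ) : M⁻¹ *ᵥ (M *ᵥ v) = v := by
  rw [Matrix.mulVec_mulVec, Matrix.nonsing_inv_mul _ ((Matrix.isUnit_iff_isUnit_det M).1 h),
    Matrix.one_mulVec]

theorem aux_mulVec_inv {m : ℕ} (M : Matrix (Fin m) (Fin m) ℂ) (h : IsUnit M)
    (v : Fin m → ℂ) : M *ᵥ (M⁻¹ *ᵥ v) = v := by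
  rw [Matrix.mulVec_mulVec, Matrix.mul_nonsing_inv _ ((Matrix.isUnit_iff_isUnit_det M).1 h),
    Matrix.one_mulVec]

theorem aux_dual {m : ℕ} (M : Matrix (Fin m) (Fin m) ℂ) (h : IsUnit M)
    (d b : Fin m → ℂ) : (Mᵀ *ᵥ d) ⬝ᵥ (M⁻¹ *ᵥ b) = d ⬝ᵥ b := by
  rw [Matrix.mulVec_transpose, ← Matrix.dotProduct_mulVec, aux_mulVec_inv M h]

theorem aux_x1 {n r : ℕ} (E A : Matrix (Fin n) (Fin n) ℂ) (B : Fin n → ℂ)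
    (V W : Matrix (Fin n) (Fin r) ℂ) (s : ℂ) (hG : IsUnit (Gm E A s))
    (hGr : IsUnit (Wᵀ * Gm E A s * V)) (c : Fin r → ℂ) (hc : x1 E A B s = V *ᵥ c) :
    x1 (Wᵀ * E * V) (Wᵀ * A * V) (Wᵀ *ᵥ B) s = c := by
  have hB : B = Gm E A s *ᵥ (V *ᵥ c) := by
    rw [← hc, x1, aux_mulVec_inv _ hG]
  have hB' : Wᵀ *ᵥ B = (Wᵀ * Gm E A s * V) *ᵥ c := by
    rw [hB]; simp [Matrix.mulVec_mulVec, Matrix.mul_assoc]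
  rw [x1, aux_Gm_reduced, hB', aux_inv_mulVec _ hGr]

theorem aux_kron {n r : ℕ} (V : Matrix (Fin n) (Fin r) ℂ) (c d : Fin r → ℂ) :
    (V ⊗ₖ V) *ᵥ vkron c d = vkron (V *ᵥ c) (V *ᵥ d) := by
  ext ⟨i, j⟩
  simp only [Matrix.mulVec, dotProduct, vkron, Matrix.kroneckerMap_apply,
    Fintype.sum_prod_type, Finset.sum_mul_sum]
  refine Finset.sum_congr rfl fun a _ => Finset.sum_congr rfl fun b _ => ?_
  ring

theorem reduced_H2_interpolation_mixed {n r : ℕ}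
    (E A N : Matrix (Fin n) (Fin n) ℂ) (Q : Matrix (Fin n) (Fin n × Fin n) ℂ)
    (B C : Fin n → ℂ) (V W : Matrix (Fin n) (Fin r) ℂ) (σ1 σ2 : ℂ)
    (hG1 : IsUnit (Gm E A σ1)) (hG2 : IsUnit (Gm E A σ2))
    (hG12 : IsUnit (Gm E A (σ1 + σ2)))
    (hGr1 : IsUnit (Wᵀ * Gm E A σ1 * V)) (hGr2 : IsUnit (Wᵀ * Gm E A σ2 * V))
    (hGr12 : IsUnit (Wᵀ * Gm E A (σ1 + σ2) * V))
    (hx1 : ∃ c : Fin r → ℂ, x1 E A B σ1 = V *ᵥ c)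
    (hx2 : ∃ c : Fin r → ℂ, x1 E A B σ2 = V *ᵥ c)
    (hy12 : ∃ d : Fin r → ℂ, y1 E A C (σ1 + σ2) = W *ᵥ d) :
    H2 (Wᵀ * E * V) (Wᵀ * A * V) (Wᵀ * N * V) (Wᵀ * Q * (V ⊗ₖ V))
        (Wᵀ *ᵥ B) (Vᵀ *ᵥ C) σ1 σ2 = H2 E A N Q B C σ1 σ2 := by
  obtain ⟨c1, hc1⟩ := hx1
  obtain ⟨c2, hc2⟩ := hx2
  obtain ⟨d, hd⟩ := hy12
  have hB2 : B2 (Wᵀ * E * V) (Wᵀ * A * V) (Wᵀ * N * V) (Wᵀ * Q * (V ⊗ₖ V)) (Wᵀ *ᵥ B) σ1 σ2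
      = Wᵀ *ᵥ B2 E A N Q B σ1 σ2 := by
    rw [B2, B2, aux_x1 E A B V W σ1 hG1 hGr1 c1 hc1, aux_x1 E A B V W σ2 hG2 hGr2 c2 hc2,
      hc1, hc2, ← aux_kron, ← Matrix.mulVec_add, Matrix.mulVec_add Wᵀ, Matrix.mulVec_smul]
    simp only [Matrix.mulVec_mulVec, Matrix.mul_assoc]
  have hGT : IsUnit (Gm E A (σ1 + σ2))ᵀ := (Matrix.isUnit_transpose _).2 hG12
  have hC : C = (Gm E A (σ1 + σ2))ᵀ *ᵥ (W *ᵥ d) := by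
    rw [← hd, y1, aux_mulVec_inv _ hGT]
  have hC' : Vᵀ *ᵥ C = (Wᵀ * Gm E A (σ1 + σ2) * V)ᵀ *ᵥ d := by
    rw [hC]
    simp [Matrix.mulVec_mulVec, Matrix.mul_assoc, Matrix.transpose_mul]
  rw [H2, H2, x2, x2, hB2, aux_Gm_reduced, hC', aux_dual _ hGr12]
  conv_rhs => rw [hC]
  rw [aux_dual _ hG12, Matrix.dotProduct_mulVec, Matrix.vecMul_transpose]
end
end

section
/- (Formula (13).) Assume Q is symmetric and let s1, s2 : ℂ be such that G(s1), G(s2) and G(s1+s2) are invertible. Then the partial derivative of the second-order transfer function with respect to its second variable satisfies deriv (fun s => H2(s1, s)) s2 = -(y1(s1+s2) ⬝ᵥ (E *ᵥ x2(s1, s2))) - (x1(s2) ⬝ᵥ (Eᵀ *ᵥ y2(s2, s1))). -/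
open Matrix
open scoped Kronecker

noncomputable section

theorem aux_inv_hasDerivAt {n : ℕ} (E A : Matrix (Fin n) (Fin n) ℂ) (s : ℂ)
    (h : IsUnit (Gm E A s)) (i j : Fin n) :
    HasDerivAt (fun t => (Gm E A t)⁻¹ i j)
      ((-((Gm E A s)⁻¹ * E * (Gm E A s)⁻¹)) i j) s := by
  let _ : NormedRing (Matrix (Fin n) (Fin n) ℂ) := Matrix.linftyOpNormedRing
  let _ : NormedAlgebra ℂ (Matrix (Fin n) (Fin n) ℂ) := Matrix.linftyOpNormedAlgebra
  obtain ⟨u, hu⟩ := h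
  have h1 : HasDerivAt (fun t : ℂ => Gm E A t) E s := by
    have := ((hasDerivAt_id s).smul_const E).sub_const A
    rw [one_smul] at this
    exact this
  have h2 := hasFDerivAt_ringInverse (𝕜 := ℂ) u
  rw [hu] at h2
  have h3 := h2.comp_hasDerivAt s h1
  have hui : ((u⁻¹ : (Matrix (Fin n) (Fin n) ℂ)ˣ) : Matrix (Fin n) (Fin n) ℂ)
      = (Gm E A s)⁻¹ := by
    rw [← hu, Matrix.coe_units_inv]
  let L : Matrix (Fin n) (Fin n) ℂ →ₗ[ℂ] ℂ := Matrix.entryLinearMap ℂ ℂ i j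
  have h4 := (LinearMap.toContinuousLinearMap L).hasFDerivAt.comp_hasDerivAt s h3
  have e1 : (LinearMap.toContinuousLinearMap L) ∘ Ring.inverse ∘ Gm E A
      = fun t => (Gm E A t)⁻¹ i j := by
    funext t
    simp [L, Matrix.nonsing_inv_eq_ringInverse]
  have e2 : (LinearMap.toContinuousLinearMap L)
      ((-((ContinuousLinearMap.mulLeftRight ℂ (Matrix (Fin n) (Fin n) ℂ)) ↑u⁻¹) ↑u⁻¹) E)
      = (-((Gm E A s)⁻¹ * E * (Gm E A s)⁻¹)) i j := by
    simp [L, hui, mul_assoc]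
  rw [e1] at h4
  exact h4.congr_deriv e2

theorem aux_mulVec_hasDerivAt {n : ℕ} {m : Type*} [Fintype m] {M : ℂ → Matrix (Fin n) m ℂ}
    {M' : Matrix (Fin n) m ℂ} {v : ℂ → m → ℂ} {v' : m → ℂ} {s : ℂ}
    (hM : ∀ i j, HasDerivAt (fun t => M t i j) (M' i j) s)
    (hv : ∀ j, HasDerivAt (fun t => v t j) (v' j) s) (i : Fin n) :
    HasDerivAt (fun t => (M t *ᵥ v t) i) ((M' *ᵥ v s + M s *ᵥ v') i) s := by
  have := HasDerivAt.fun_sum (u := Finset.univ) (fun j _ => (hM i j).mul (hv j))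
  simpa [Matrix.mulVec, dotProduct, Finset.sum_add_distrib] using this

theorem aux_mode2 {n : ℕ} (Q : Matrix (Fin n) (Fin n × Fin n) ℂ) (u v w : Fin n → ℂ) :
    w ⬝ᵥ (mode2 Q *ᵥ vkron u v) = v ⬝ᵥ (Q *ᵥ vkron u w) := by
  simp only [dotProduct, Matrix.mulVec, mode2, vkron, Fintype.sum_prod_type, Finset.mul_sum]
  rw [Finset.sum_comm]
  conv_rhs => rw [Finset.sum_comm]
  refine Finset.sum_congr rfl fun l _ => ?_
  rw [Finset.sum_comm]
  refine Finset.sum_congr rfl fun i _ => Finset.sum_congr rfl fun j _ => ?_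
  ring

theorem H2_second_partial_formula {n : ℕ}
    (E A N : Matrix (Fin n) (Fin n) ℂ) (Q : Matrix (Fin n) (Fin n × Fin n) ℂ)
    (B C : Fin n → ℂ) (s1 s2 : ℂ)
    (hQ : QSymm Q)
    (hG1 : IsUnit (Gm E A s1)) (hG2 : IsUnit (Gm E A s2))
    (hG12 : IsUnit (Gm E A (s1 + s2))) :
    deriv (fun s => H2 E A N Q B C s1 s) s2 =
      -(y1 E A C (s1 + s2) ⬝ᵥ (E *ᵥ x2 E A N Q B s1 s2)) -
        (x1 E A B s2 ⬝ᵥ (Eᵀ *ᵥ y2 E A N Q B C s2 s1)) := by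
  set d : Fin n → ℂ := -((Gm E A s2)⁻¹ *ᵥ (E *ᵥ x1 E A B s2)) with hd
  have hx1 : ∀ j, HasDerivAt (fun t => x1 E A B t j) (d j) s2 := by
    intro j
    have := aux_mulVec_hasDerivAt (aux_inv_hasDerivAt E A s2 hG2)
      (v := fun _ => B) (v' := 0) (fun j => hasDerivAt_const s2 (B j)) j
    simpa [x1, hd, Matrix.neg_mulVec, Matrix.mulVec_mulVec, mul_assoc] using this
  have hk : ∀ p, HasDerivAt (fun t => vkron (x1 E A B s1) (x1 E A B t) p)
      (vkron (x1 E A B s1) d p) s2 := fun p => (hx1 p.2).const_mul _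
  have hB2 : ∀ j, HasDerivAt (fun t => B2 E A N Q B s1 t j)
      ((Q *ᵥ vkron (x1 E A B s1) d + (1/2 : ℂ) • (N *ᵥ d)) j) s2 := by
    intro j
    have a := aux_mulVec_hasDerivAt (M := fun _ => Q) (M' := 0)
      (fun i j => hasDerivAt_const s2 (Q i j)) hk j
    have b := (aux_mulVec_hasDerivAt (M := fun _ => N) (M' := 0)
      (v := fun t => x1 E A B s1 + x1 E A B t)
      (fun i j => hasDerivAt_const s2 (N i j)) (fun j => (hx1 j).const_add _) j).const_mul (1/2 : ℂ)
    have c := a.add b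
    rw [Matrix.zero_mulVec, Matrix.zero_mulVec, zero_add, zero_add] at c
    exact c
  have hG : ∀ i j, HasDerivAt (fun t => (Gm E A (s1 + t))⁻¹ i j)
      ((-((Gm E A (s1 + s2))⁻¹ * E * (Gm E A (s1 + s2))⁻¹)) i j) s2 := fun i j =>
    (aux_inv_hasDerivAt E A (s1 + s2) hG12 i j).comp_const_add s1 s2
  have hx2 := aux_mulVec_hasDerivAt hG hB2
  have hH : HasDerivAt (fun s => H2 E A N Q B C s1 s) _ s2 :=
    HasDerivAt.fun_sum (u := Finset.univ) (fun j _ => (hx2 j).const_mul (C j))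
  rw [hH.deriv]
  change C ⬝ᵥ _ = _
  have hy : ∀ w, y1 E A C (s1 + s2) ⬝ᵥ w = C ⬝ᵥ ((Gm E A (s1 + s2))⁻¹ *ᵥ w) := by
    intro w
    rw [y1, ← Matrix.transpose_nonsing_inv, Matrix.mulVec_transpose, ← Matrix.dotProduct_mulVec]
  have hlast : x1 E A B s2 ⬝ᵥ (Eᵀ *ᵥ y2 E A N Q B C s2 s1)
      = -(d ⬝ᵥ C2 E A N Q B C s2 s1) := by
    rw [y2, ← Matrix.transpose_nonsing_inv, Matrix.dotProduct_mulVec, Matrix.vecMul_transpose,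
      Matrix.dotProduct_mulVec, Matrix.vecMul_transpose, hd, neg_dotProduct, neg_neg]
  have hN : d ⬝ᵥ (Nᵀ *ᵥ y1 E A C (s1 + s2)) = y1 E A C (s1 + s2) ⬝ᵥ (N *ᵥ d) := by
    rw [Matrix.dotProduct_mulVec, Matrix.vecMul_transpose, dotProduct_comm]
  have hC2 : d ⬝ᵥ C2 E A N Q B C s2 s1 = y1 E A C (s1 + s2) ⬝ᵥ
      (Q *ᵥ vkron (x1 E A B s1) d + (1/2 : ℂ) • (N *ᵥ d)) := by
    rw [C2, add_comm s2 s1, dotProduct_add, dotProduct_smul, aux_mode2, hN,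
      ← dotProduct_smul, ← dotProduct_add]
  rw [hlast, hC2, hy, hy, dotProduct_add, x2, Matrix.neg_mulVec,
    dotProduct_neg, sub_neg_eq_add]
  simp only [Matrix.mulVec_mulVec, mul_assoc]
end
end
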